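/- Let N ≥ 2 and let A : ℤ_N → ℕ be a multiset with positive total mass such that Φ_N(X) ∣ A(X). Let p be a prime with p^α ∥ N, α ≥ 1, and let D(N) := N / rad(N), where rad(N) is the product of the distinct primes dividing N. Then at least one of the following holds: (1) the product Φ_N(X)·Φ_{N/p}(X)⋯Φ_{N/p^α}(X) divides A(X); or (2) there exists a ∈ ℤ_N with A(a) > 0 such that for every ν ∈ {0, 1, …, p−1} there exists x ∈ ℤ_N with A(x) > 0 and x ≡ a + ν N/p (mod p·D(N)). -/

import Mathlib

open Polynomial

/-- Mask polynomial of a multiset (weight function) on `ZMod N`: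
`A(X) = ∑_{x ∈ ℤ_N} w(x) · X^{x.val}`. -/
noncomputable def wmaskPoly (N : ℕ) (w : ZMod N → ℕ) : Polynomial ℤ :=
  ∑ i ∈ Finset.range N, C ((w (i : ZMod N)) : ℤ) * X ^ i

/-- Total mass `∑_x w(x)` of a multiset on `ZMod N`. -/
def wmass (N : ℕ) (w : ZMod N → ℕ) : ℕ :=
  ∑ i ∈ Finset.range N, w (i : ZMod N)

lemma cd_geom (n : ℕ) (x : ℂ) (h : x ^ n = 1) :
    ∑ j ∈ Finset.range n, x ^ j = if x = 1 then (n : ℂ) else 0 := by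
  split_ifs with hx
  · simp [hx]
  · have h1 := mul_geom_sum x n
    rw [h, sub_self] at h1
    rcases mul_eq_zero.mp h1 with h2 | h2
    · exact absurd (sub_eq_zero.mp h2) hx
    · exact h2

lemma cd_root (z : ℂ) (d e N : ℕ) (hN : 0 < N) (hde : N = e * d) (hz : IsPrimitiveRoot z N)
    (i s : ℕ) : (z ^ i * (z⁻¹) ^ s) ^ e = 1 ↔ i ≡ s [MOD d] := by
  have hw : IsPrimitiveRoot (z ^ e) d := hz.pow hN hde
  have hz0 : z ≠ 0 := hz.ne_zero hN.ne'
  have hd : d ≠ 0 := by rintro rfl; simp at hde; omega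
  rw [hw.eq_orderOf, ← (hw.isUnit hd).unit_spec, orderOf_units, ← pow_eq_pow_iff_modEq,
    Units.ext_iff]
  simp only [Units.val_pow_eq_pow_val, IsUnit.unit_spec]
  rw [mul_pow, inv_pow, inv_pow, mul_inv_eq_one₀ (pow_ne_zero _ (pow_ne_zero _ hz0)),
    ← pow_mul, ← pow_mul, ← pow_mul, ← pow_mul, mul_comm i, mul_comm s]

lemma cd_main (N p D m : ℕ) (hN : 0 < N) (hNe : N = p * D * m) (hp : p.Prime)
    (hpm : Nat.Coprime p m) (hco : ∀ k, Nat.Coprime k p → Nat.Coprime k m → Nat.Coprime k N)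
    (z : ℂ) (hz : IsPrimitiveRoot z N) (f : ℕ → ℂ)
    (hf : ∀ k, Nat.Coprime k N → ∑ i ∈ Finset.range N, f i * (z ^ i) ^ k = 0) :
    ∃ k0 : ℕ, ∀ s : ℕ,
      (p : ℂ) * ∑ i ∈ (Finset.range N).filter (fun i => i ≡ s [MOD p * D]),
        f i * (z ^ i * (z⁻¹) ^ s) =
      ∑ i ∈ (Finset.range N).filter (fun i => i ≡ s [MOD D]),
        f i * (z ^ i * (z⁻¹) ^ s) ^ k0 := by
  have hz0 : z ≠ 0 := hz.ne_zero hN.ne'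
  have hD : 0 < D := by
    rcases Nat.eq_zero_or_pos D with h | h
    · simp [h] at hNe; omega
    · exact h
  -- the exceptional exponent
  have hj : ∃ j0 < p, ∀ a < p, a ≠ j0 → Nat.Coprime (1 + m * a) p := by
    haveI := Fact.mk hp
    have hm0 : (m : ZMod p) ≠ 0 := by
      intro h
      rw [ZMod.natCast_eq_zero_iff] at h
      exact (hp.coprime_iff_not_dvd.mp hpm) h
    refine ⟨(-(m : ZMod p)⁻¹).val, ZMod.val_lt _, fun a ha hne => ?_⟩
    rw [Nat.coprime_comm, hp.coprime_iff_not_dvd]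
    intro h
    apply hne
    rw [← ZMod.natCast_eq_zero_iff] at h
    push_cast at h
    have : (a : ZMod p) = -(m : ZMod p)⁻¹ := by
      field_simp
      linear_combination h
    rw [← this, ZMod.val_natCast, Nat.mod_eq_of_lt ha]
  obtain ⟨j0, hj0, hj⟩ := hj
  refine ⟨1 + m * j0, fun s => ?_⟩
  set u : ℕ → ℂ := fun i => z ^ i * (z⁻¹) ^ s with hu
  have huN : ∀ i, u i ^ N = 1 := by
    intro i
    simp only [hu, mul_pow, inv_pow, ← pow_mul]
    rw [mul_comm i, mul_comm s, pow_mul, pow_mul, hz.pow_eq_one]; simp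
  have hk : ∀ k, Nat.Coprime k N → ∑ i ∈ Finset.range N, f i * u i ^ k = 0 := by
    intro k hk
    have := hf k hk
    simp only [hu, mul_pow, ← mul_assoc]
    rw [← Finset.sum_mul, this, zero_mul]
  have hT : ∀ a < p, a ≠ j0 →
      ∑ i ∈ (Finset.range N).filter (fun i => i ≡ s [MOD D]), f i * u i ^ (1 + m * a) = 0 := by
    intro a ha hne
    have h1 : ∑ l ∈ Finset.range D, ∑ i ∈ Finset.range N, f i * u i ^ (1 + m * a + m * p * l) = 0 := by
      apply Finset.sum_eq_zero
      intro l _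
      apply hk
      apply hco
      · have := hj a ha hne
        rw [show 1 + m * a + m * p * l = 1 + m * a + p * (m * l) by ring]
        simpa using this
      · rw [show 1 + m * a + m * p * l = 1 + m * (a + p * l) by ring]
        simp
    rw [Finset.sum_comm] at h1
    have h2 : ∀ i, ∑ l ∈ Finset.range D, f i * u i ^ (1 + m * a + m * p * l) =
        if i ≡ s [MOD D] then (D : ℂ) * (f i * u i ^ (1 + m * a)) else 0 := by
      intro i
      have h3 : ∀ l, f i * u i ^ (1 + m * a + m * p * l) =
          f i * u i ^ (1 + m * a) * (u i ^ (m * p)) ^ l := by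
        intro l; rw [pow_add _ (1 + m * a), pow_mul _ (m * p)]; ring
      simp only [h3]
      rw [← Finset.mul_sum, cd_geom]
      · have h4 := cd_root z D (m * p) N hN (by rw [hNe]; ring) hz i s
        simp only [hu, h4]
        split_ifs <;> ring
      · rw [← pow_mul, show m * p * D = N by rw [hNe]; ring, huN]
    simp only [h2] at h1
    rw [← Finset.sum_filter, ← Finset.mul_sum] at h1
    rcases mul_eq_zero.mp h1 with h | h
    · exact absurd h (by exact_mod_cast hD.ne')
    · exact h
  have hsum : ∑ a ∈ Finset.range p,
      ∑ i ∈ (Finset.range N).filter (fun i => i ≡ s [MOD D]), f i * u i ^ (1 + m * a) =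
      ∑ i ∈ (Finset.range N).filter (fun i => i ≡ s [MOD D]), f i * u i ^ (1 + m * j0) :=
    Finset.sum_eq_single_of_mem j0 (Finset.mem_range.mpr hj0)
      (fun a ha hne => hT a (Finset.mem_range.mp ha) hne)
  rw [← hsum, Finset.sum_comm]
  have h5 : ∀ i ∈ (Finset.range N).filter (fun i => i ≡ s [MOD D]),
      ∑ a ∈ Finset.range p, f i * u i ^ (1 + m * a) =
      if i ≡ s [MOD p * D] then (p : ℂ) * (f i * u i) else 0 := by
    intro i hi
    have hi2 := (Finset.mem_filter.mp hi).2
    have h3 : ∀ a, f i * u i ^ (1 + m * a) = f i * u i * (u i ^ m) ^ a := by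
      intro a; rw [pow_add, pow_mul]; ring
    simp only [h3]
    rw [← Finset.mul_sum, cd_geom]
    · have h4 := cd_root z (p * D) m N hN (by rw [hNe]; ring) hz i s
      simp only [hu, h4]
      split_ifs <;> ring
    · rw [← pow_mul]
      exact (cd_root z D (m * p) N hN (by rw [hNe]; ring) hz i s).mpr hi2
  rw [Finset.sum_congr rfl h5, ← Finset.sum_filter, Finset.filter_filter, Finset.mul_sum]
  apply Finset.sum_congr
  · ext i
    simp only [Finset.mem_filter]
    constructor
    · rintro ⟨h1, h2⟩
      exact ⟨h1, h2.of_mul_left _, h2⟩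
    · rintro ⟨h1, _, h2⟩
      exact ⟨h1, h2⟩
  · intros; rfl

lemma cd_dvd (n : ℕ) (hn : 0 < n) (y : ℂ) (hy : IsPrimitiveRoot y n) (P : ℤ[X]) :
    cyclotomic n ℤ ∣ P ↔ aeval y P = 0 := by
  rw [cyclotomic_eq_minpoly hy hn, minpoly.isIntegrallyClosed_dvd_iff (hy.isIntegral hn)]

lemma cd_relprime (a b : ℕ) (ha : 0 < a) (hb : 0 < b) (hab : a ≠ b) :
    IsRelPrime (cyclotomic a ℤ) (cyclotomic b ℤ) := by
  rw [(cyclotomic.irreducible ha).isRelPrime_iff_not_dvd]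
  intro h
  have hy := Complex.isPrimitiveRoot_exp a ha.ne'
  have h1 := (cd_dvd a ha _ hy _).mp h
  haveI : NeZero (b : ℂ) := ⟨by exact_mod_cast hb.ne'⟩
  rw [aeval_def, eval₂_eq_eval_map, map_cyclotomic] at h1
  exact hab (hy.unique (isRoot_cyclotomic_iff.mp h1))

lemma cd_aeval (N q : ℕ) (hq : 0 < q) (w : ZMod N → ℕ) (y : ℂ) (s : ℕ) :
    ∑ i ∈ (Finset.range N).filter (fun i => i % q = s), (w (i : ZMod N) : ℂ) * y ^ i =
    y ^ s * aeval (y ^ q) (∑ i ∈ (Finset.range N).filter (fun i => i % q = s),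
      C ((w (i : ZMod N)) : ℤ) * X ^ (i / q) : ℤ[X]) := by
  rw [map_sum, Finset.mul_sum]
  apply Finset.sum_congr rfl
  intro i hi
  have h := (Finset.mem_filter.mp hi).2
  simp only [map_mul, map_pow, aeval_X, aeval_C]
  conv_lhs => rw [← Nat.mod_add_div i q, h, pow_add, pow_mul]
  rw [← h]
  conv_lhs => rw [Nat.mod_add_div i q]
  simp
  ring

lemma cd_mask (N : ℕ) (w : ZMod N → ℕ) (y : ℂ) :
    aeval y (wmaskPoly N w) = ∑ i ∈ Finset.range N, (w (i : ZMod N) : ℂ) * y ^ i := by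
  simp [wmaskPoly]

/-- Proposition 5.1 (multiscale cuboid dichotomy): if `Φ_N ∣ A(X)` and `p^α ∥ N`, then
either `Φ_N Φ_{N/p} ⋯ Φ_{N/p^α} ∣ A(X)`, or there is `a` in the support of `A` such that
for every `ν ∈ {0,…,p-1}` the support of `A` meets the coset
`a + ν N/p + (p·D(N))·ℤ_N`, where `D(N) = N / rad(N)`. -/
theorem cuboid_dichotomy (N : ℕ) (hN : 2 ≤ N) (w : ZMod N → ℕ) (hw : 0 < wmass N w)
    (hΦ : cyclotomic N ℤ ∣ wmaskPoly N w)
    (p α : ℕ) (hp : p.Prime) (hα : 1 ≤ α) (hpd : p ^ α ∣ N) (hpn : ¬ p ^ (α + 1) ∣ N) :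
    ((∏ β ∈ Finset.range (α + 1), cyclotomic (N / p ^ β) ℤ) ∣ wmaskPoly N w) ∨
    (∃ a : ZMod N, 0 < w a ∧ ∀ ν ∈ Finset.range p, ∃ x : ZMod N, 0 < w x ∧
      ∃ c : ZMod N,
        x = a + ((ν * (N / p) : ℕ) : ZMod N) +
          ((p * (N / ∏ r ∈ N.primeFactors, r) : ℕ) : ZMod N) * c) := by
  rw [or_iff_not_imp_right]
  intro hno
  obtain ⟨M, hM⟩ := hpd
  have hN0 : 0 < N := by omega
  have hp0 := hp.pos
  have hM0 : M ≠ 0 := by rintro rfl; simp at hM; omega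
  have hpM : ¬ p ∣ M := by
    rintro ⟨c, rfl⟩
    exact hpn ⟨c, by rw [hM]; ring⟩
  obtain ⟨D', hD'⟩ := Nat.prod_primeFactors_dvd M
  set m := ∏ r ∈ M.primeFactors, r with hm
  have hm0 : 0 < m := by
    rcases Nat.eq_zero_or_pos m with h | h
    · rw [h] at hD'; simp at hD'; omega
    · exact h
  have hD'0 : 0 < D' := by
    rcases Nat.eq_zero_or_pos D' with h | h
    · rw [h] at hD'; simp at hD'; omega
    · exact h
  obtain ⟨γ, rfl⟩ : ∃ γ, α = γ + 1 := ⟨α - 1, by omega⟩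
  have hpf : ∏ r ∈ N.primeFactors, r = p * m := by
    have hcop : Nat.Coprime (p ^ (γ + 1)) M :=
      Nat.Coprime.pow_left _ ((hp.coprime_iff_not_dvd).mpr hpM)
    rw [hM, hcop.primeFactors_mul, Nat.primeFactors_prime_pow (by omega) hp,
      Finset.prod_union (by
        rw [Finset.disjoint_singleton_left]
        intro h
        exact hpM (Nat.dvd_of_mem_primeFactors h))]
    simp [hm]
  set D := p ^ γ * D' with hD
  have hNe : N = p * D * m := by rw [hM, hD, hD']; ring
  have hDN : N / ∏ r ∈ N.primeFactors, r = D := by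
    rw [hpf]
    apply Nat.div_eq_of_eq_mul_left (by positivity)
    rw [hNe]; ring
  have hNp : N / p = D * m := by
    apply Nat.div_eq_of_eq_mul_left hp0
    rw [hNe]; ring
  rw [hDN, hNp] at hno
  have hD0 : 0 < D := by positivity
  have hpm : Nat.Coprime p m := by
    rw [hp.coprime_iff_not_dvd]
    intro h
    exact hpM (hD' ▸ Dvd.dvd.mul_right h D')
  have hco : ∀ k, Nat.Coprime k p → Nat.Coprime k m → Nat.Coprime k N := by
    intro k h1 h2
    rw [hM]
    refine Nat.Coprime.mul_right (h1.pow_right _) ?_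
    apply Nat.coprime_of_dvd
    intro r hr hrk hrM
    have hrm : r ∣ m := Finset.dvd_prod_of_mem _ (Nat.mem_primeFactors.mpr ⟨hr, hrM, hM0⟩)
    exact hr.one_lt.ne' (Nat.dvd_one.mp (h2 ▸ Nat.dvd_gcd hrk hrm))
  obtain ⟨z, hz⟩ : ∃ z : ℂ, IsPrimitiveRoot z N := ⟨_, Complex.isPrimitiveRoot_exp N hN0.ne'⟩
  have hz0 : z ≠ 0 := hz.ne_zero hN0.ne'
  have hf : ∀ k, Nat.Coprime k N →
      ∑ i ∈ Finset.range N, (w (i : ZMod N) : ℂ) * (z ^ i) ^ k = 0 := by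
    intro k hk
    have := (cd_dvd N hN0 _ (hz.pow_of_coprime k hk) _).mp hΦ
    rw [cd_mask] at this
    rw [← this]
    apply Finset.sum_congr rfl
    intro i _
    rw [← pow_mul, ← pow_mul, mul_comm i]
  obtain ⟨k0, hk0⟩ := cd_main N p D m hN0 hNe hp hpm hco z hz (fun i => (w (i : ZMod N) : ℂ)) hf
  -- vanishing of every class sum at `z`
  have hB : ∀ s, ∑ i ∈ (Finset.range N).filter (fun i => i ≡ s [MOD p * D]),
      (w (i : ZMod N) : ℂ) * z ^ i = 0 := by
    intro s
    by_cases hs : ∃ i0 ∈ (Finset.range N).filter (fun i => i ≡ s [MOD p * D]),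
        0 < w (i0 : ZMod N)
    swap
    · push Not at hs
      apply Finset.sum_eq_zero
      intro i hi
      have := hs i hi
      simp [Nat.le_zero.mp this]
    obtain ⟨i0, hi0, hwi0⟩ := hs
    have hi0s := (Finset.mem_filter.mp hi0).2
    have h1 : ∃ ν ∈ Finset.range p, ∀ x : ZMod N, 0 < w x → ∀ c : ZMod N,
        x ≠ (i0 : ZMod N) + ((ν * (D * m) : ℕ) : ZMod N) + ((p * D : ℕ) : ZMod N) * c := by
      by_contra hcon
      push Not at hcon
      exact hno ⟨i0, hwi0, hcon⟩
    obtain ⟨ν, _, hν⟩ := h1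
    have hemp : ∀ i ∈ (Finset.range N).filter (fun i => i ≡ i0 + ν * (D * m) [MOD p * D]),
        w (i : ZMod N) = 0 := by
      intro i hi
      by_contra hne
      have hmod := (Finset.mem_filter.mp hi).2
      obtain ⟨c, hc⟩ := hmod.symm.dvd
      apply hν i (Nat.pos_of_ne_zero hne) (c : ZMod N)
      have : ((i : ℤ) : ZMod N) = (((i0 + ν * (D * m) : ℕ) + (p * D : ℕ) * c : ℤ) : ZMod N) := by
        congr 1
        linarith
      push_cast at this ⊢
      exact this
    have h2 := hk0 (i0 + ν * (D * m))
    rw [Finset.sum_eq_zero (fun i hi => by simp [hemp i hi]), mul_zero] at h2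
    have hcl : ∀ i, i ≡ i0 + ν * (D * m) [MOD D] ↔ i ≡ s [MOD D] := by
      intro i
      have e1 : i0 + ν * (D * m) ≡ i0 [MOD D] := by
        rw [show ν * (D * m) = D * (ν * m) by ring]
        simp [Nat.ModEq]
      have e2 := e1.trans (hi0s.of_mul_left p)
      exact ⟨fun h => h.trans e2, fun h => h.trans e2.symm⟩
    simp only [hcl] at h2
    simp only [mul_pow, ← mul_assoc] at h2
    rw [← Finset.sum_mul] at h2
    have hT := (mul_eq_zero.mp h2.symm).resolve_right
      (pow_ne_zero _ (pow_ne_zero _ (inv_ne_zero hz0)))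
    have h3 := hk0 s
    simp only [mul_pow, ← mul_assoc] at h3
    rw [← Finset.sum_mul, ← Finset.sum_mul, hT, zero_mul, ← mul_assoc] at h3
    have h4 := (mul_eq_zero.mp h3).resolve_right (pow_ne_zero _ (inv_ne_zero hz0))
    exact (mul_eq_zero.mp h4).resolve_left (by exact_mod_cast hp0.ne')
  have hq : 0 < p * D := by positivity
  apply Finset.prod_dvd_of_isRelPrime
  · intro a ha b hb hab
    simp only [Finset.coe_range, Set.mem_Iio] at ha hb
    have hda : p ^ a ∣ N := (pow_dvd_pow p (by omega)).trans ⟨M, hM⟩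
    have hdb : p ^ b ∣ N := (pow_dvd_pow p (by omega)).trans ⟨M, hM⟩
    apply cd_relprime _ _ (Nat.div_pos (Nat.le_of_dvd hN0 hda) (by positivity))
      (Nat.div_pos (Nat.le_of_dvd hN0 hdb) (by positivity))
    intro h
    apply hab
    obtain ⟨x, hx⟩ := hda
    obtain ⟨y, hy⟩ := hdb
    have ex : N / p ^ a = x := Nat.div_eq_of_eq_mul_right (by positivity) hx
    have ey : N / p ^ b = y := Nat.div_eq_of_eq_mul_right (by positivity) hy
    rw [ex, ey] at h
    subst h
    have hx0 : 0 < x := by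
      rcases Nat.eq_zero_or_pos x with h | h
      · rw [h] at hx; simp at hx; omega
      · exact h
    exact Nat.pow_right_injective hp.two_le (Nat.eq_of_mul_eq_mul_right hx0 (hx.symm.trans hy))
  · intro β hβ
    have hβ' : β ≤ γ + 1 := by simpa [Nat.lt_succ_iff] using hβ
    obtain ⟨δ, hδ⟩ := Nat.exists_eq_add_of_le hβ'
    have hn : N / p ^ β = p ^ δ * D' * m := by
      apply Nat.div_eq_of_eq_mul_right (by positivity)
      rw [hM, hδ, hD']; ring
    rw [hn]
    have hn0 : 0 < p ^ δ * D' * m := by positivity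
    obtain ⟨y, hy⟩ : ∃ y : ℂ, IsPrimitiveRoot y (p ^ δ * D' * m) :=
      ⟨_, Complex.isPrimitiveRoot_exp _ hn0.ne'⟩
    rw [cd_dvd _ hn0 y hy, cd_mask]
    have hyq : IsPrimitiveRoot (y ^ (p * D)) m := by
      have h1 : IsPrimitiveRoot (y ^ (p ^ δ * D')) m := hy.pow hn0 rfl
      have h2 := h1.pow_of_coprime (p ^ β) (hpm.pow_left β)
      rw [← pow_mul] at h2
      convert h2 using 2
      rw [hD, show p * (p ^ γ * D') = p ^ (γ + 1) * D' by ring, hδ]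
      ring
    have hzq : IsPrimitiveRoot (z ^ (p * D)) m := hz.pow hN0 hNe
    rw [← Finset.sum_fiberwise_of_maps_to (g := fun i => i % (p * D))
      (t := Finset.range (p * D)) (fun i _ => Finset.mem_range.mpr (Nat.mod_lt _ hq))]
    apply Finset.sum_eq_zero
    intro s hs
    have hs' := Finset.mem_range.mp hs
    rw [cd_aeval N (p * D) hq w y s]
    have h1 := hB s
    simp only [Nat.ModEq, Nat.mod_eq_of_lt hs'] at h1
    rw [cd_aeval N (p * D) hq w z s] at h1
    have h2 := (mul_eq_zero.mp h1).resolve_left (pow_ne_zero _ hz0)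
    rw [← cd_dvd m hm0 _ hzq, cd_dvd m hm0 _ hyq] at h2
    rw [h2, mul_zero]
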